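/- Let X and Y be random vectors in ℝⁿ that are elliptically distributed with the same location μ ∈ ℝⁿ and the same characteristic generator φ, with dispersion matrices Σ_x and Σ_y respectively. If Σ_x ⪯ Σ_y, then G_n(X − μ) ≤_st G_n(Y − μ), i.e., P(G_n(X − μ) > t) ≤ P(G_n(Y − μ) > t) for all t ∈ ℝ. In particular, if μ = c·1_n for some c ∈ ℝ (including μ = 0), then G_n(X) ≤_st G_n(Y). -/

import Mathlib

open MeasureTheory ProbabilityTheory Matrix

/-- Gini index of `x ∈ ℝⁿ`: `G_n(x) = (1/n²) ∑_i ∑_j |x_i − x_j|`. -/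
noncomputable def gini {n : ℕ} (x : Fin n → ℝ) : ℝ :=
  (1 / (n : ℝ) ^ 2) * ∑ i, ∑ j, |x i - x j|

/-- Characteristic function of a random vector `X : Ω → ℝⁿ` at `t ∈ ℝⁿ`:
`E[exp(i⟨t,X⟩)]`. -/
noncomputable def charFn {Ω : Type*} [MeasurableSpace Ω] {n : ℕ}
    (P : Measure Ω) (X : Ω → (Fin n → ℝ)) (t : Fin n → ℝ) : ℂ :=
  ∫ ω, Complex.exp (((∑ i, t i * X ω i : ℝ) : ℂ) * Complex.I) ∂P

/-!
Since `{x | gini x ≤ t}` is closed, convex and symmetric about `0`, it suffices that the more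
dispersed law gives less mass to every such set `K`. Factoring the dispersion matrices writes the
two laws as images of one spherical law `ν`, the less dispersed one after an additional positive
contraction; diagonalizing it and treating one eigenvector at a time, the claim becomes
`ν K ≤ ν (T ⁻¹' K)` where `T` multiplies the component along a unit vector `e` by `a ∈ [0, 1]`.

For smooth radial `ν` this is a derivative computation. By Anderson's inequality (a consequence of
Prékopa–Leindler), for `Q x = q (‖x‖²)` with `q` decreasing, `s ↦ ∫ x in K, Q (x + s e)` is maximal
at `s = 0`, so its second derivative is nonpositive there. That derivative is, up to a positive
factor, the derivative in `log a` of the mass of the preimage of `K` under the stretch by `a`, for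
the measure with density `-q' (‖x‖²)`, and every smooth bump function is such a density.

A general spherical law is reached by swapping norms: if `X` and `Z` are independent and spherical,
then `‖Z‖ X` and `‖X‖ Z` have the same law. Taking for `Z` a smooth radial law on a thin shell
around the unit sphere turns the inequality for `Z` into the one for `X`, up to a dilation of `K`
that tends to the identity.
-/

open Set Filter Topology Module
open scoped ENNReal Pointwise InnerProductSpace

section PrekopaLeindler

lemma volume_add_volume_le_of_isCompact {A B : Set ℝ} (hA : IsCompact A) (hB : IsCompact B)
    (hA' : A.Nonempty) (hB' : B.Nonempty) : volume A + volume B ≤ volume (A + B) := by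
  obtain ⟨a, ha, ha_max⟩ := hA.exists_isGreatest hA'
  obtain ⟨b, hb, hb_min⟩ := hB.exists_isLeast hB'
  -- The translates `b + A` and `a + B` both lie in `A + B` and meet only at `a + b`.
  have inter_subset : (b +ᵥ A) ∩ (a +ᵥ B) ⊆ {a + b} := by
    rintro _ ⟨⟨x, hx, rfl⟩, ⟨y, hy, hxy⟩⟩
    have := ha_max hx
    have := hb_min hy
    simp only [vadd_eq_add] at hxy
    simp only [vadd_eq_add, mem_singleton_iff]
    linarith
  have disjoint : AEDisjoint volume (b +ᵥ A) (a +ᵥ B) :=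
    measure_mono_null inter_subset Real.volume_singleton
  calc volume A + volume B = volume ((b +ᵥ A) ∪ (a +ᵥ B)) := by
        rw [measure_union₀ (hB.vadd a).measurableSet.nullMeasurableSet disjoint,
          measure_vadd, measure_vadd]
    _ ≤ volume (A + B) := by
        refine measure_mono (union_subset ?_ (vadd_set_subset_add ha))
        rw [add_comm A]
        exact vadd_set_subset_add hb

lemma volume_add_volume_le {A B : Set ℝ} (hA : MeasurableSet A) (hB : MeasurableSet B)
    (hA' : A.Nonempty) (hB' : B.Nonempty) : volume A + volume B ≤ volume (A + B) := by
  obtain ⟨a, ha⟩ := hA'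
  obtain ⟨b, hb⟩ := hB'
  simp only [hA.measure_eq_iSup_isCompact, hB.measure_eq_iSup_isCompact, iSup_and']
  refine ENNReal.biSup_add_biSup_le' ⟨∅, by simp⟩ ⟨∅, by simp⟩ fun K hK L hL ↦ ?_
  calc volume K + volume L ≤ volume (insert a K) + volume (insert b L) := by
        gcongr <;> exact subset_insert _ _
    _ ≤ volume (insert a K + insert b L) :=
        volume_add_volume_le_of_isCompact (hK.2.insert a) (hL.2.insert b)
          (insert_nonempty _ _) (insert_nonempty _ _)
    _ ≤ volume (A + B) := measure_mono <|
        add_subset_add (insert_subset ha hK.1) (insert_subset hb hL.1)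

lemma lintegral_eq_lintegral_meas_ofReal_lt {α : Type*} [MeasurableSpace α] (μ : Measure α)
    {f : α → ℝ≥0∞} (hf : Measurable f) :
    ∫⁻ x, f x ∂μ = ∫⁻ t in Ioi (0 : ℝ), μ {x | ENNReal.ofReal t < f x} := by
  by_cases htop : μ {x | f x = ∞} = 0
  · have hfin : ∀ᵐ x ∂μ, f x < ∞ := by simpa [ae_iff] using htop
    calc ∫⁻ x, f x ∂μ = ∫⁻ x, ENNReal.ofReal (f x).toReal ∂μ :=
          lintegral_congr_ae (hfin.mono fun x hx ↦ (ENNReal.ofReal_toReal hx.ne).symm)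
      _ = ∫⁻ t in Ioi (0 : ℝ), μ {x | t < (f x).toReal} :=
          lintegral_eq_lintegral_meas_lt μ (.of_forall fun _ ↦ ENNReal.toReal_nonneg)
            hf.ennreal_toReal.aemeasurable
      _ = _ := setLIntegral_congr_fun measurableSet_Ioi fun t ht ↦ measure_congr <|
          eventuallyEq_set.2 <| hfin.mono fun x hx ↦
            (ENNReal.ofReal_lt_iff_lt_toReal (le_of_lt ht) hx.ne).symm
  · rw [lintegral_eq_top_of_measure_eq_top_ne_zero hf.aemeasurable htop, eq_comm, eq_top_iff]
    calc ∞ = ∫⁻ _ in Ioi (0 : ℝ), μ {x | f x = ∞} := by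
          rw [setLIntegral_const, Real.volume_Ioi, ENNReal.mul_top htop]
      _ ≤ _ := lintegral_mono fun t ↦ measure_mono fun x (hx : f x = ∞) ↦ by
          simp [hx]

variable {p q : ℝ}

lemma rpow_mul_rpow_le_ofReal_mul_add (hp : 0 < p) (hq : 0 < q) (hpq : p + q = 1) (x y : ℝ≥0∞) :
    x ^ p * y ^ q ≤ ENNReal.ofReal p * x + ENNReal.ofReal q * y := by
  have hconj : p⁻¹.HolderConjugate q⁻¹ :=
    Real.holderConjugate_iff.2 ⟨(one_lt_inv₀ hp).2 (by linarith), by simpa using hpq⟩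
  calc x ^ p * y ^ q
      ≤ (x ^ p) ^ p⁻¹ / ENNReal.ofReal p⁻¹ + (y ^ q) ^ q⁻¹ / ENNReal.ofReal q⁻¹ :=
        ENNReal.young_inequality _ _ hconj
    _ = _ := by
        rw [ENNReal.rpow_rpow_inv hp.ne', ENNReal.rpow_rpow_inv hq.ne',
          ENNReal.ofReal_inv_of_pos hp, ENNReal.ofReal_inv_of_pos hq, div_eq_mul_inv,
          div_eq_mul_inv, inv_inv, inv_inv, mul_comm x, mul_comm y]

variable {u v w : ℝ → ℝ≥0∞}

lemma volume_setOf_lt_add_le (hp : 0 < p) (hq : 0 < q) (hpq : p + q = 1)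
    (hu : Measurable u) (hv : Measurable v) (h : ∀ x y, u x ^ p * v y ^ q ≤ w (p * x + q * y))
    {t : ℝ≥0∞} (hu_ne : {x | t < u x}.Nonempty) (hv_ne : {x | t < v x}.Nonempty) :
    ENNReal.ofReal p * volume {x | t < u x} + ENNReal.ofReal q * volume {x | t < v x} ≤
      volume {x | t < w x} := by
  calc ENNReal.ofReal p * volume {x | t < u x} + ENNReal.ofReal q * volume {x | t < v x}
      = volume (p • {x | t < u x}) + volume (q • {x | t < v x}) := by
        simp [Measure.addHaar_smul, abs_of_pos hp, abs_of_pos hq]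
    _ ≤ volume (p • {x | t < u x} + q • {x | t < v x}) :=
        volume_add_volume_le ((measurableSet_lt measurable_const hu).const_smul₀ p)
          ((measurableSet_lt measurable_const hv).const_smul₀ q) hu_ne.smul_set hv_ne.smul_set
    _ ≤ volume {x | t < w x} := by
        refine measure_mono ?_
        rintro _ ⟨_, ⟨x, hx, rfl⟩, _, ⟨y, hy, rfl⟩, rfl⟩
        calc t = t ^ p * t ^ q := by
              rw [← ENNReal.rpow_add_of_nonneg _ _ hp.le hq.le, hpq, ENNReal.rpow_one]
          _ < u x ^ p * v y ^ q :=
              ENNReal.mul_lt_mul (ENNReal.rpow_lt_rpow hx hp) (ENNReal.rpow_lt_rpow hy hq)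
          _ ≤ w (p * x + q * y) := h x y

lemma prekopa_leindler_real_of_iSup_eq_one (hp : 0 < p) (hq : 0 < q) (hpq : p + q = 1)
    (hu : Measurable u) (hv : Measurable v) (hw : Measurable w)
    (hu_sup : ⨆ x, u x = 1) (hv_sup : ⨆ x, v x = 1)
    (h : ∀ x y, u x ^ p * v y ^ q ≤ w (p * x + q * y)) :
    (∫⁻ x, u x) ^ p * (∫⁻ x, v x) ^ q ≤ ∫⁻ x, w x := by
  have level (t : ℝ) : ENNReal.ofReal p * volume {x | ENNReal.ofReal t < u x} +
      ENNReal.ofReal q * volume {x | ENNReal.ofReal t < v x} ≤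
        volume {x | ENNReal.ofReal t < w x} := by
    rcases le_or_gt 1 (ENNReal.ofReal t) with ht | ht
    · have level_empty {f : ℝ → ℝ≥0∞} (hf : ⨆ x, f x = 1) : {x | ENNReal.ofReal t < f x} = ∅ :=
        eq_empty_of_forall_notMem fun x hx ↦ (hx.trans_le (hf ▸ le_iSup f x)).not_ge ht
      simp [level_empty hu_sup, level_empty hv_sup]
    · exact volume_setOf_lt_add_le hp hq hpq hu hv h (lt_iSup_iff.1 (ht.trans_eq hu_sup.symm))
        (lt_iSup_iff.1 (ht.trans_eq hv_sup.symm))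
  have meas_level (f : ℝ → ℝ≥0∞) : Measurable fun t ↦ volume {x | ENNReal.ofReal t < f x} :=
    Antitone.measurable fun s t hst ↦ measure_mono fun x hx ↦
      (ENNReal.ofReal_le_ofReal hst).trans_lt hx
  calc (∫⁻ x, u x) ^ p * (∫⁻ x, v x) ^ q
      ≤ ENNReal.ofReal p * (∫⁻ x, u x) + ENNReal.ofReal q * ∫⁻ x, v x :=
        rpow_mul_rpow_le_ofReal_mul_add hp hq hpq _ _
    _ ≤ ∫⁻ x, w x := by
        rw [lintegral_eq_lintegral_meas_ofReal_lt _ hu, lintegral_eq_lintegral_meas_ofReal_lt _ hv,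
          lintegral_eq_lintegral_meas_ofReal_lt _ hw, ← lintegral_const_mul _ (meas_level u),
          ← lintegral_const_mul _ (meas_level v),
          ← lintegral_add_left ((meas_level u).const_mul _)]
        exact lintegral_mono level

lemma prekopa_leindler_real_of_iSup_ne_top (hp : 0 < p) (hq : 0 < q) (hpq : p + q = 1)
    (hu : Measurable u) (hv : Measurable v) (hw : Measurable w)
    (hu_sup : ⨆ x, u x ≠ ∞) (hv_sup : ⨆ x, v x ≠ ∞)
    (h : ∀ x y, u x ^ p * v y ^ q ≤ w (p * x + q * y)) :
    (∫⁻ x, u x) ^ p * (∫⁻ x, v x) ^ q ≤ ∫⁻ x, w x := by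
  set M := ⨆ x, u x with hM
  set N := ⨆ x, v x with hN
  rcases eq_or_ne M 0 with hM0 | hM0
  · simp [ENNReal.iSup_eq_zero.1 (hM.symm.trans hM0), hp]
  rcases eq_or_ne N 0 with hN0 | hN0
  · simp [ENNReal.iSup_eq_zero.1 (hN.symm.trans hN0), hq]
  have scale (a b : ℝ≥0∞) : (M⁻¹ * a) ^ p * (N⁻¹ * b) ^ q =
      (M⁻¹ ^ p * N⁻¹ ^ q) * (a ^ p * b ^ q) := by
    rw [ENNReal.mul_rpow_of_nonneg _ _ hp.le, ENNReal.mul_rpow_of_nonneg _ _ hq.le]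
    ring
  have normalized := prekopa_leindler_real_of_iSup_eq_one hp hq hpq (hu.const_mul M⁻¹)
    (hv.const_mul N⁻¹) (hw.const_mul (M⁻¹ ^ p * N⁻¹ ^ q))
    (by rw [← ENNReal.mul_iSup, ENNReal.inv_mul_cancel hM0 hu_sup])
    (by rw [← ENNReal.mul_iSup, ENNReal.inv_mul_cancel hN0 hv_sup])
    (fun x y ↦ by rw [scale]; gcongr; exact h x y)
  rw [lintegral_const_mul _ hu, lintegral_const_mul _ hv, lintegral_const_mul _ hw, scale]
    at normalized
  refine (ENNReal.mul_le_mul_iff_right ?_ ?_).1 normalized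
  · simp [hp, hq, hu_sup, hv_sup, hp.le, hq.le]
  · simp [ENNReal.mul_eq_top, hp, hq, hM0, hN0, hp.not_gt, hq.not_gt]

theorem prekopa_leindler_real (hp : 0 < p) (hq : 0 < q) (hpq : p + q = 1)
    (hu : Measurable u) (hv : Measurable v) (hw : Measurable w)
    (h : ∀ x y, u x ^ p * v y ^ q ≤ w (p * x + q * y)) :
    (∫⁻ x, u x) ^ p * (∫⁻ x, v x) ^ q ≤ ∫⁻ x, w x := by
  have truncated (k : ℕ) :
      (∫⁻ x, min (u x) k) ^ p * (∫⁻ x, min (v x) k) ^ q ≤ ∫⁻ x, w x := by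
    have iSup_ne_top (f : ℝ → ℝ≥0∞) : ⨆ x, min (f x) k ≠ ∞ :=
      ne_top_of_le_ne_top (ENNReal.natCast_ne_top k) (iSup_le fun x ↦ min_le_right _ _)
    refine prekopa_leindler_real_of_iSup_ne_top hp hq hpq (hu.min measurable_const)
      (hv.min measurable_const) hw (iSup_ne_top u) (iSup_ne_top v) fun x y ↦ ?_
    refine le_trans ?_ (h x y)
    gcongr <;> exact min_le_left _ _
  have tendsto_truncated {f : ℝ → ℝ≥0∞} (hf : Measurable f) :
      Tendsto (fun k : ℕ ↦ ∫⁻ x, min (f x) k) atTop (𝓝 (∫⁻ x, f x)) := by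
    refine lintegral_tendsto_of_tendsto_of_monotone (fun k ↦ (hf.min measurable_const).aemeasurable)
      (.of_forall fun x k l hkl ↦ by dsimp only; gcongr) (.of_forall fun x ↦ ?_)
    simpa using tendsto_const_nhds.min ENNReal.tendsto_nat_nhds_top
  rcases eq_or_ne (∫⁻ x, u x) 0 with hu0 | hu0
  · simp [hu0, hp]
  rcases eq_or_ne (∫⁻ x, v x) 0 with hv0 | hv0
  · simp [hv0, hq]
  exact le_of_tendsto' (ENNReal.Tendsto.mul
    ((tendsto_truncated hu).ennrpow_const p) (by simp [hu0, hp, hp.not_gt])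
    ((tendsto_truncated hv).ennrpow_const q) (by simp [hv0, hq, hq.not_gt])) truncated

section Pi

variable {k : ℕ}

lemma measurable_comp_cons {f : (Fin (k + 1) → ℝ) → ℝ≥0∞} (hf : Measurable f) :
    Measurable fun z : ℝ × (Fin k → ℝ) ↦ f (Fin.cons z.1 z.2) := by
  refine hf.comp (measurable_pi_lambda _ fun i ↦ ?_)
  cases i using Fin.cases <;> simp only [Fin.cons_zero, Fin.cons_succ] <;> fun_prop

lemma lintegral_eq_lintegral_lintegral_cons {f : (Fin (k + 1) → ℝ) → ℝ≥0∞} (hf : Measurable f) :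
    ∫⁻ x, f x = ∫⁻ a : ℝ, ∫⁻ x : Fin k → ℝ, f (Fin.cons a x) := by
  rw [← (volume_preserving_piFinSuccAbove (fun _ ↦ ℝ) 0).symm.lintegral_comp hf,
    Measure.volume_eq_prod]
  simp only [MeasurableEquiv.piFinSuccAbove_symm_apply, Fin.insertNthEquiv_zero]
  exact lintegral_prod _ (measurable_comp_cons hf).aemeasurable

theorem prekopa_leindler_pi (hp : 0 < p) (hq : 0 < q) (hpq : p + q = 1)
    {u v w : (Fin k → ℝ) → ℝ≥0∞} (hu : Measurable u) (hv : Measurable v) (hw : Measurable w)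
    (h : ∀ x y, u x ^ p * v y ^ q ≤ w (p • x + q • y)) :
    (∫⁻ x, u x) ^ p * (∫⁻ x, v x) ^ q ≤ ∫⁻ x, w x := by
  induction k with
  | zero =>
    simp only [Measure.volume_pi_eq_dirac (0 : Fin 0 → ℝ), lintegral_dirac]
    simpa using h 0 0
  | succ k ih =>
    have meas_section {f : (Fin (k + 1) → ℝ) → ℝ≥0∞} (hf : Measurable f) (a : ℝ) :
        Measurable fun x : Fin k → ℝ ↦ f (Fin.cons a x) :=
      (measurable_comp_cons hf).comp measurable_prodMk_left
    simp only [lintegral_eq_lintegral_lintegral_cons, hu, hv, hw]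
    refine prekopa_leindler_real hp hq hpq (measurable_comp_cons hu).lintegral_prod_right'
      (measurable_comp_cons hv).lintegral_prod_right'
      (measurable_comp_cons hw).lintegral_prod_right' fun a b ↦ ?_
    refine ih (meas_section hu a) (meas_section hv b) (meas_section hw _) fun x y ↦ ?_
    convert h (Fin.cons a x) (Fin.cons b y) using 2
    ext i
    cases i using Fin.cases <;> simp

end Pi

variable {E : Type*} [NormedAddCommGroup E] [InnerProductSpace ℝ E] [FiniteDimensional ℝ E]
  [MeasurableSpace E] [BorelSpace E]

theorem prekopa_leindler (hp : 0 < p) (hq : 0 < q) (hpq : p + q = 1)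
    {u v w : E → ℝ≥0∞} (hu : Measurable u) (hv : Measurable v) (hw : Measurable w)
    (h : ∀ x y, u x ^ p * v y ^ q ≤ w (p • x + q • y)) :
    (∫⁻ x, u x) ^ p * (∫⁻ x, v x) ^ q ≤ ∫⁻ x, w x := by
  let e := (stdOrthonormalBasis ℝ E).repr.symm.toLinearEquiv.toLinearMap ∘ₗ
    (WithLp.linearEquiv 2 ℝ (Fin (finrank ℝ E) → ℝ)).symm.toLinearMap
  have he : MeasurePreserving e :=
    (stdOrthonormalBasis ℝ E).measurePreserving_repr_symm.comp (PiLp.volume_preserving_toLp _)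
  rw [← he.lintegral_comp hu, ← he.lintegral_comp hv, ← he.lintegral_comp hw]
  refine prekopa_leindler_pi hp hq hpq (hu.comp he.measurable) (hv.comp he.measurable)
    (hw.comp he.measurable) fun x y ↦ ?_
  simpa only [map_add, map_smul] using h (e x) (e y)

theorem volume_rpow_mul_volume_rpow_le (hp : 0 < p) (hq : 0 < q) (hpq : p + q = 1)
    {A B C : Set E} (hA : MeasurableSet A) (hB : MeasurableSet B) (hC : MeasurableSet C)
    (hABC : p • A + q • B ⊆ C) : volume A ^ p * volume B ^ q ≤ volume C := by
  simp only [← lintegral_indicator_one, hA, hB, hC]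
  refine prekopa_leindler hp hq hpq (measurable_one.indicator hA) (measurable_one.indicator hB)
    (measurable_one.indicator hC) fun x y ↦ ?_
  by_cases hxy : x ∈ A ∧ y ∈ B
  · have : p • x + q • y ∈ C :=
      hABC (add_mem_add (smul_mem_smul_set hxy.1) (smul_mem_smul_set hxy.2))
    simp [hxy, this]
  · rcases not_and_or.1 hxy with hx | hy
    · simp [hx, hp]
    · simp [hy, hq]

end PrekopaLeindler

section Anderson

/-- A convex set that is symmetric about the origin. -/
structure IsSymmConvex {E : Type*} [AddCommGroup E] [Module ℝ E] (K : Set E) : Prop where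
  convex : Convex ℝ K
  neg_mem : ∀ ⦃x⦄, x ∈ K → -x ∈ K

namespace IsSymmConvex

lemma preimage {E F : Type*} [AddCommGroup E] [Module ℝ E] [AddCommGroup F] [Module ℝ F]
    {K : Set F} (hK : IsSymmConvex K) (T : E →ₗ[ℝ] F) : IsSymmConvex (T ⁻¹' K) where
  convex := hK.convex.linear_preimage T
  neg_mem x hx := by simpa only [mem_preimage, map_neg] using hK.neg_mem hx

variable {E : Type*} [NormedAddCommGroup E] [InnerProductSpace ℝ E] [FiniteDimensional ℝ E]
  [MeasurableSpace E] [BorelSpace E] {K L : Set E}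

theorem volume_inter_preimage_add_right_le (hK : IsSymmConvex K) (hL : IsSymmConvex L)
    (hKm : MeasurableSet K) (hLm : MeasurableSet L) (z : E) :
    volume (K ∩ (· + z) ⁻¹' L) ≤ volume (K ∩ L) := by
  set A := K ∩ (· + z) ⁻¹' L
  have hAm : MeasurableSet A := hKm.inter (hLm.preimage (measurable_add_const z))
  have midpoint_mem : (1 / 2 : ℝ) • A + (1 / 2 : ℝ) • -A ⊆ K ∩ L := by
    rintro _ ⟨_, ⟨x, ⟨hxK, hxL⟩, rfl⟩, _, ⟨y, ⟨hyK, hyL⟩, rfl⟩, rfl⟩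
    constructor
    · exact hK.convex hxK (by simpa using hK.neg_mem hyK) (by norm_num) (by norm_num) (by norm_num)
    · have := hL.convex hxL (hL.neg_mem hyL) (by norm_num : (0 : ℝ) ≤ 1 / 2)
        (by norm_num : (0 : ℝ) ≤ 1 / 2) (by norm_num)
      convert this using 1
      module
  have := volume_rpow_mul_volume_rpow_le (by norm_num) (by norm_num) (by norm_num) hAm hAm.neg
    (hKm.inter hLm) midpoint_mem
  rwa [Measure.measure_neg, ← ENNReal.rpow_add_of_nonneg _ _ (by norm_num) (by norm_num),
    add_halves, ENNReal.rpow_one] at this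

theorem lintegral_comp_add_right_le (hK : IsSymmConvex K) (hKm : MeasurableSet K)
    {g : E → ℝ≥0∞} (hg : Measurable g) (hg_concave : QuasiconcaveOn ℝ univ g)
    (hg_even : g.Even) (z : E) :
    ∫⁻ x in K, g (x + z) ≤ ∫⁻ x in K, g x := by
  rw [lintegral_eq_lintegral_meas_ofReal_lt _ hg,
    lintegral_eq_lintegral_meas_ofReal_lt (f := fun x ↦ g (x + z)) _
      (hg.comp (measurable_add_const z))]
  refine lintegral_mono fun t ↦ ?_
  have hL : IsSymmConvex {x | ENNReal.ofReal t < g x} :=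
    ⟨by simpa using hg_concave.convex_gt (ENNReal.ofReal t),
      fun x hx ↦ by simpa only [mem_ofPred_eq, hg_even x] using hx⟩
  have hLm : MeasurableSet {x | ENNReal.ofReal t < g x} := measurableSet_lt measurable_const hg
  calc volume.restrict K {x | ENNReal.ofReal t < g (x + z)}
      = volume (K ∩ (· + z) ⁻¹' {x | ENNReal.ofReal t < g x}) := by
        rw [inter_comm]
        exact Measure.restrict_apply (hLm.preimage (measurable_add_const z))
    _ ≤ volume (K ∩ {x | ENNReal.ofReal t < g x}) :=
        hK.volume_inter_preimage_add_right_le hL hKm hLm z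
    _ = volume.restrict K {x | ENNReal.ofReal t < g x} := by
        rw [inter_comm, Measure.restrict_apply hLm]

end IsSymmConvex
end Anderson

section Calculus

lemma nonpos_of_isLocalMax_of_hasDerivAt_deriv {f f' : ℝ → ℝ} {x c : ℝ}
    (hf : ∀ y, HasDerivAt f (f' y) y) (hf' : HasDerivAt f' c x) (hmax : IsLocalMax f x) :
    c ≤ 0 := by
  by_contra! hc
  have deriv_f : deriv f = f' := funext fun y ↦ (hf y).deriv
  have hmin : IsLocalMin f x := isLocalMin_of_deriv_deriv_pos (by rwa [deriv_f, hf'.deriv])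
    hmax.deriv_eq_zero (hf x).continuousAt
  have f_const : f =ᶠ[𝓝 x] fun _ ↦ f x := by
    filter_upwards [hmin, hmax] with y hy hy' using le_antisymm hy' hy
  have f'_zero : f' =ᶠ[𝓝 x] fun _ ↦ 0 := by simpa [deriv_f] using f_const.deriv
  exact hc.ne (hf'.unique ((hasDerivAt_const x 0).congr_of_eventuallyEq f'_zero)).symm

lemma hasDerivAt_integral_of_eq_zero_off_compact {α : Type*} [TopologicalSpace α]
    [MeasurableSpace α] [OpensMeasurableSpace α] [T2Space α] {μ : Measure α}
    [IsFiniteMeasureOnCompacts μ] {G G' : ℝ → α → ℝ} {s : ℝ} {C : Set α} (hC : IsCompact C)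
    (hG_zero : ∀ᶠ r in 𝓝 s, ∀ x ∉ C, G r x = 0) (hG : ∀ r, Continuous (G r))
    (hG' : Continuous fun z : ℝ × α ↦ G' z.1 z.2)
    (hderiv : ∀ r x, HasDerivAt (G · x) (G' r x) r) :
    HasDerivAt (fun r ↦ ∫ x, G r x ∂μ) (∫ x, G' s x ∂μ) s := by
  obtain ⟨ε, hε, hG_ball⟩ := Metric.eventually_nhds_iff_ball.1 hG_zero
  obtain ⟨M, hM⟩ := ((isCompact_closedBall s ε).prod hC).exists_bound_of_continuousOn
    hG'.continuousOn
  have G'_zero : ∀ r ∈ Metric.ball s ε, ∀ x ∉ C, G' r x = 0 := fun r hr x hx ↦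
    (hderiv r x).unique <| (hasDerivAt_const r 0).congr_of_eventuallyEq <|
      (Metric.isOpen_ball.eventually_mem hr).mono fun r' hr' ↦ hG_ball r' hr' x hx
  have G_integrable : Integrable (G s) μ :=
    (hG s).integrable_of_hasCompactSupport <|
      HasCompactSupport.intro hC (hG_ball s (Metric.mem_ball_self hε))
  refine (hasDerivAt_integral_of_dominated_loc_of_deriv_le (F' := G')
    (bound := C.indicator fun _ ↦ M) (Metric.ball_mem_nhds s hε)
    (.of_forall fun r ↦ (hG r).aestronglyMeasurable) G_integrable
    (by fun_prop : Continuous (G' s)).aestronglyMeasurable (.of_forall fun x r hr ↦ ?_)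
    ((integrable_indicator_iff hC.measurableSet).2 (integrableOn_const hC.measure_lt_top.ne))
    (.of_forall fun x r _ ↦ hderiv r x)).2
  by_cases hx : x ∈ C
  · simpa [hx] using hM (r, x) ⟨Metric.ball_subset_closedBall hr, hx⟩
  · simp [hx, G'_zero r hr x hx]

end Calculus

section SecondVariation

lemma hasDerivAt_comp_add_smul {E : Type*} [AddCommGroup E] [Module ℝ E] {q q' : E → ℝ} {e : E}
    (hderiv : ∀ x, HasLineDerivAt ℝ q (q' x) x e) (s : ℝ) (x : E) :
    HasDerivAt (fun r : ℝ ↦ q (x + r • e)) (q' (x + s • e)) s := by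
  have h : HasDerivAt (fun r : ℝ ↦ q (x + s • e + r • e)) (q' (x + s • e)) (s - s) := by
    simpa [HasLineDerivAt] using hderiv (x + s • e)
  refine (h.comp_sub_const s s).congr_of_eventuallyEq (.of_forall fun r ↦ ?_)
  simp only [add_assoc, ← add_smul, add_sub_cancel]

variable {E : Type*} [NormedAddCommGroup E] [InnerProductSpace ℝ E] {q q' q'' : E → ℝ} {e : E}

lemma hasCompactSupport_of_hasLineDerivAt (hderiv : ∀ x, HasLineDerivAt ℝ q (q' x) x e)
    (hsupp : HasCompactSupport q) : HasCompactSupport q' := by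
  refine hsupp.mono' fun x hx ↦ not_imp_comm.1 (fun hxq ↦ ?_) hx
  have q_zero : q =ᶠ[𝓝 x] fun _ ↦ 0 := notMem_tsupport_iff_eventuallyEq.1 hxq
  simpa [lineDeriv] using
    (q_zero.hasLineDerivAt_iff.1 (hderiv x)).lineDeriv.symm

variable [FiniteDimensional ℝ E] [MeasurableSpace E] [BorelSpace E] {K : Set E}

lemma hasDerivAt_setIntegral_comp_add_smul (hq : Continuous q) (hq' : Continuous q')
    (hderiv : ∀ x, HasLineDerivAt ℝ q (q' x) x e) (hsupp : HasCompactSupport q) (K : Set E)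
    (s : ℝ) :
    HasDerivAt (fun r : ℝ ↦ ∫ x in K, q (x + r • e)) (∫ x in K, q' (x + s • e)) s := by
  have hC : IsCompact ((fun z : E × ℝ ↦ z.1 - z.2 • e) '' tsupport q ×ˢ Metric.closedBall s 1) :=
    (hsupp.isCompact.prod (isCompact_closedBall s 1)).image (by fun_prop)
  refine hasDerivAt_integral_of_eq_zero_off_compact (G := fun r x ↦ q (x + r • e))
    (G' := fun r x ↦ q' (x + r • e)) hC ?_ (fun r ↦ by fun_prop) (by fun_prop)
    (hasDerivAt_comp_add_smul hderiv)
  filter_upwards [Metric.closedBall_mem_nhds s one_pos] with r hr x hx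
  exact image_eq_zero_of_notMem_tsupport fun hxr ↦ hx ⟨(x + r • e, r), ⟨hxr, hr⟩, by simp⟩

theorem IsSymmConvex.setIntegral_secondLineDeriv_nonpos (hK : IsSymmConvex K)
    (hKm : MeasurableSet K) (hq : Continuous q) (hq' : Continuous q') (hq'' : Continuous q'')
    (hderiv : ∀ x, HasLineDerivAt ℝ q (q' x) x e)
    (hderiv' : ∀ x, HasLineDerivAt ℝ q' (q'' x) x e) (hsupp : HasCompactSupport q)
    (hq_nonneg : 0 ≤ q) (hq_concave : QuasiconcaveOn ℝ univ q) (hq_even : q.Even) :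
    ∫ x in K, q'' x ≤ 0 := by
  have isMax (s : ℝ) : ∫ x in K, q (x + s • e) ≤ ∫ x in K, q x := by
    rw [integral_eq_lintegral_of_nonneg_ae (f := fun x ↦ q (x + s • e))
      (.of_forall fun x ↦ hq_nonneg (x + s • e))
      (Continuous.aestronglyMeasurable (by fun_prop)),
      integral_eq_lintegral_of_nonneg_ae (.of_forall hq_nonneg) hq.aestronglyMeasurable]
    refine ENNReal.toReal_mono
      (hq.integrable_of_hasCompactSupport hsupp).lintegral_lt_top.ne ?_
    have ofReal_concave : QuasiconcaveOn ℝ univ (ENNReal.ofReal ∘ q) :=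
      hq_concave.monotone_comp ENNReal.ofReal_mono
    exact hK.lintegral_comp_add_right_le hKm hq.measurable.ennreal_ofReal ofReal_concave
      (fun x ↦ by simp [hq_even x]) (s • e)
  have second_deriv := hasDerivAt_setIntegral_comp_add_smul hq' hq'' hderiv'
    (hasCompactSupport_of_hasLineDerivAt hderiv hsupp) K 0
  simpa using nonpos_of_isLocalMax_of_hasDerivAt_deriv
    (hasDerivAt_setIntegral_comp_add_smul hq hq' hderiv hsupp K) second_deriv
    (.of_forall fun s ↦ by simpa using isMax s)

end SecondVariation

section Stretch

variable {E : Type*} [NormedAddCommGroup E] [InnerProductSpace ℝ E]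

/-- The linear map which, for a unit vector `e`, multiplies the component along `e` by `a` and
fixes the orthogonal complement of `e`. -/
noncomputable def stretch (e : E) (a : ℝ) : E →L[ℝ] E :=
  .id ℝ E + (a - 1) • (innerSL ℝ e).smulRight e

variable {e : E}

lemma stretch_apply (a : ℝ) (x : E) : stretch e a x = x + ((a - 1) * ⟪e, x⟫_ℝ) • e := by
  simp [stretch, mul_smul]

@[simp]
lemma stretch_one : stretch e 1 = .id ℝ E := by
  simp [stretch]

lemma inner_stretch (he : ‖e‖ = 1) (a : ℝ) (x : E) : ⟪e, stretch e a x⟫_ℝ = a * ⟪e, x⟫_ℝ := by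
  simp only [stretch_apply, inner_add_right, inner_smul_right, real_inner_self_eq_norm_sq, he]
  ring

lemma stretch_self (he : ‖e‖ = 1) (a : ℝ) : stretch e a e = a • e := by
  rw [stretch_apply, real_inner_self_eq_norm_sq, he]
  module

lemma stretch_stretch (he : ‖e‖ = 1) (a b : ℝ) (x : E) :
    stretch e a (stretch e b x) = stretch e (a * b) x := by
  rw [stretch_apply a, inner_stretch he, stretch_apply, stretch_apply]
  module

lemma norm_stretch_sq (he : ‖e‖ = 1) (a : ℝ) (x : E) :
    ‖stretch e a x‖ ^ 2 = ‖x‖ ^ 2 + (a ^ 2 - 1) * ⟪e, x⟫_ℝ ^ 2 := by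
  rw [stretch_apply, norm_add_sq_real, norm_smul, inner_smul_right, real_inner_comm, he,
    Real.norm_eq_abs, mul_one, sq_abs]
  ring

lemma mul_norm_le_norm_stretch (he : ‖e‖ = 1) {a c : ℝ} (hc : 0 ≤ c) (hc_one : c ≤ 1)
    (hca : c ≤ a) (x : E) : c * ‖x‖ ≤ ‖stretch e a x‖ := by
  refine le_of_sq_le_sq ?_ (norm_nonneg _)
  have inner_sq_le : ⟪e, x⟫_ℝ ^ 2 ≤ ‖x‖ ^ 2 := by
    simpa [he, sq_abs] using pow_le_pow_left₀ (abs_nonneg _) (abs_real_inner_le_norm e x) 2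
  rw [norm_stretch_sq he, mul_pow]
  nlinarith [mul_nonneg (sub_nonneg.2 (pow_le_pow_left₀ hc hca 2)) (sq_nonneg ⟪e, x⟫_ℝ),
    mul_nonneg (sub_nonneg.2 (pow_le_one₀ hc hc_one : c ^ 2 ≤ 1)) (sub_nonneg.2 inner_sq_le)]

lemma det_stretch [FiniteDimensional ℝ E] (he : ‖e‖ = 1) (a : ℝ) :
    LinearMap.det (stretch e a : E →ₗ[ℝ] E) = a := by
  have : (stretch e a : E →ₗ[ℝ] E) = LinearMap.transvection ((a - 1) • innerₛₗ ℝ e) e := by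
    ext x
    simp [stretch_apply, LinearMap.transvection.apply]
  simp [this, he]

lemma hasLineDerivAt_comp {f : E → ℝ} {g : ℝ → ℝ} {f' g' : ℝ} {x v : E}
    (hg : HasDerivAt g g' (f x)) (hf : HasLineDerivAt ℝ f f' x v) :
    HasLineDerivAt ℝ (g ∘ f) (g' * f') x v :=
  HasDerivAt.comp_of_eq 0 hg hf (by simp)

lemma hasDerivAt_norm_stretch_sq (he : ‖e‖ = 1) (x : E) (a : ℝ) :
    HasDerivAt (fun r ↦ ‖stretch e r x‖ ^ 2) (2 * a * ⟪e, x⟫_ℝ ^ 2) a := by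
  simp only [norm_stretch_sq he]
  simpa using (((hasDerivAt_pow 2 a).sub_const 1).mul_const (⟪e, x⟫_ℝ ^ 2)).const_add (‖x‖ ^ 2)

lemma hasLineDerivAt_norm_stretch_sq (he : ‖e‖ = 1) (a : ℝ) (x : E) :
    HasLineDerivAt ℝ (fun y ↦ ‖stretch e a y‖ ^ 2) (2 * a ^ 2 * ⟪e, x⟫_ℝ) x e := by
  have h := (((hasDerivAt_id (0 : ℝ)).smul_const (a • e)).const_add (stretch e a x)).norm_sq
  simpa [HasLineDerivAt, map_add, map_smul, stretch_self he, inner_smul_right, real_inner_comm,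
    inner_stretch he, sq, mul_assoc] using h

lemma hasLineDerivAt_inner_self (he : ‖e‖ = 1) (x : E) :
    HasLineDerivAt ℝ (fun y ↦ ⟪e, y⟫_ℝ) 1 x e := by
  simpa [he] using (innerSL ℝ e).hasFDerivAt.hasLineDerivAt (x := x) e

lemma continuous_norm_stretch_sq (he : ‖e‖ = 1) :
    Continuous fun z : ℝ × E ↦ ‖stretch e z.1 z.2‖ ^ 2 := by
  simp only [norm_stretch_sq he]
  fun_prop

end Stretch

section RadialProfile

/-- A `C²` nonincreasing function on `ℝ` vanishing near `+∞`, used as a radial profile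
`x ↦ ρ (‖x‖ ^ 2)`. -/
structure IsRadialProfile (ρ : ℝ → ℝ) : Prop where
  contDiff : ContDiff ℝ 2 ρ
  antitone : Antitone ρ
  eventually_eq_zero : ρ =ᶠ[atTop] 0

namespace IsRadialProfile

variable {ρ : ℝ → ℝ} (hρ : IsRadialProfile ρ)
include hρ

lemma hasDerivAt (t : ℝ) : HasDerivAt ρ (deriv ρ t) t :=
  (hρ.contDiff.differentiable two_ne_zero t).hasDerivAt

lemma contDiff_deriv : ContDiff ℝ 1 (deriv ρ) :=
  (contDiff_succ_iff_deriv.1 (one_add_one_eq_two (R := WithTop ℕ∞) ▸ hρ.contDiff)).2.2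

lemma hasDerivAt_deriv (t : ℝ) : HasDerivAt (deriv ρ) (deriv (deriv ρ) t) t :=
  (hρ.contDiff_deriv.differentiable one_ne_zero t).hasDerivAt

lemma continuous_deriv_deriv : Continuous (deriv (deriv ρ)) :=
  hρ.contDiff_deriv.continuous_deriv_one

lemma nonneg (t : ℝ) : 0 ≤ ρ t := by
  obtain ⟨s, hs, hts⟩ := (hρ.eventually_eq_zero.and (eventually_ge_atTop t)).exists
  simpa [hs] using hρ.antitone hts

lemma exists_forall_ge_eq_zero : ∃ b, ∀ t ≥ b, ρ t = 0 ∧ deriv ρ t = 0 := by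
  obtain ⟨b, hb⟩ := eventually_atTop.1 hρ.eventually_eq_zero
  refine ⟨b + 1, fun t ht ↦ ⟨hb t (by linarith), ?_⟩⟩
  have : ρ =ᶠ[𝓝 t] fun _ ↦ 0 :=
    (eventually_gt_nhds (by linarith : b < t)).mono fun s hs ↦ hb s hs.le
  simpa using this.deriv_eq

variable {E : Type*} [NormedAddCommGroup E] [InnerProductSpace ℝ E] {e : E}

lemma exists_radius_stretch (he : ‖e‖ = 1) {c : ℝ} (hc : 0 < c) :
    ∃ R, ∀ a ≥ c, ∀ x : E, R < ‖x‖ →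
      ρ (‖stretch e a x‖ ^ 2) = 0 ∧ deriv ρ (‖stretch e a x‖ ^ 2) = 0 := by
  obtain ⟨b, hb⟩ := hρ.exists_forall_ge_eq_zero
  refine ⟨√b / min c 1, fun a ha x hx ↦ hb _ ?_⟩
  have hc' : 0 < min c 1 := lt_min hc one_pos
  have : √b ≤ ‖stretch e a x‖ := by
    rw [div_lt_iff₀' hc'] at hx
    exact hx.le.trans (mul_norm_le_norm_stretch he hc'.le (min_le_right _ _)
      ((min_le_left _ _).trans ha) x)
  exact Real.sqrt_le_left (norm_nonneg _) |>.1 this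

lemma hasCompactSupport_comp_norm_stretch_sq [FiniteDimensional ℝ E] (he : ‖e‖ = 1) {a : ℝ}
    (ha : 0 < a) : HasCompactSupport fun x ↦ ρ (‖stretch e a x‖ ^ 2) := by
  obtain ⟨R, hR⟩ := hρ.exists_radius_stretch he ha
  exact HasCompactSupport.intro (isCompact_closedBall (0 : E) R) fun x hx ↦
    (hR a le_rfl x (by simpa using hx)).1

omit hρ in
lemma quasiconvexOn_norm_stretch_sq (a : ℝ) :
    QuasiconvexOn ℝ univ fun x ↦ ‖stretch e a x‖ ^ 2 := by
  have := ((convexOn_norm (convex_univ (𝕜 := ℝ) (E := E))).comp_linearMap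
    (stretch e a : E →ₗ[ℝ] E)).pow (fun x _ ↦ norm_nonneg _) 2
  exact this.quasiconvexOn

variable [FiniteDimensional ℝ E] [MeasurableSpace E] [BorelSpace E] {K : Set E}

lemma setIntegral_variation_nonpos (he : ‖e‖ = 1) {a : ℝ} (ha : 0 < a) (hK : IsSymmConvex K)
    (hKm : MeasurableSet K) :
    ∫ x in K, (deriv ρ (‖stretch e a x‖ ^ 2) +
      a * (deriv (deriv ρ) (‖stretch e a x‖ ^ 2) * (2 * a * ⟪e, x⟫_ℝ ^ 2))) ≤ 0 := by
  have := hρ.contDiff.continuous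
  have := hρ.contDiff_deriv.continuous
  have := hρ.continuous_deriv_deriv
  have second_variation := hK.setIntegral_secondLineDeriv_nonpos (e := e) hKm
    (q := fun x ↦ ρ (‖stretch e a x‖ ^ 2))
    (q' := fun x ↦ deriv ρ (‖stretch e a x‖ ^ 2) * (2 * a ^ 2 * ⟪e, x⟫_ℝ))
    (q'' := fun x ↦ 2 * a ^ 2 * (deriv ρ (‖stretch e a x‖ ^ 2) +
      a * (deriv (deriv ρ) (‖stretch e a x‖ ^ 2) * (2 * a * ⟪e, x⟫_ℝ ^ 2))))
    (by fun_prop) (by fun_prop) (by fun_prop)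
    (fun x ↦ hasLineDerivAt_comp (hρ.hasDerivAt _) (hasLineDerivAt_norm_stretch_sq he a x))
    (fun x ↦ ?_) (hρ.hasCompactSupport_comp_norm_stretch_sq he ha) (fun x ↦ hρ.nonneg _)
    ((quasiconvexOn_norm_stretch_sq a).antitone_comp hρ.antitone) (fun x ↦ by simp)
  · rw [integral_const_mul] at second_variation
    exact nonpos_of_mul_nonpos_right second_variation (by positivity)
  · have h := HasDerivAt.mul
      (hasLineDerivAt_comp (hρ.hasDerivAt_deriv _) (hasLineDerivAt_norm_stretch_sq he a x))
      ((hasLineDerivAt_inner_self he x).const_mul (2 * a ^ 2))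
    refine h.congr_deriv ?_
    simp only [Function.comp_apply, zero_smul, add_zero]
    ring

lemma hasDerivAt_setIntegral_stretch (he : ‖e‖ = 1) {a : ℝ} (ha : 0 < a) (K : Set E) :
    HasDerivAt (fun r ↦ ∫ x in K, r * deriv ρ (‖stretch e r x‖ ^ 2))
      (∫ x in K, (deriv ρ (‖stretch e a x‖ ^ 2) +
        a * (deriv (deriv ρ) (‖stretch e a x‖ ^ 2) * (2 * a * ⟪e, x⟫_ℝ ^ 2)))) a := by
  have := hρ.contDiff_deriv.continuous
  have := hρ.continuous_deriv_deriv
  have := continuous_norm_stretch_sq he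
  obtain ⟨R, hR⟩ := hρ.exists_radius_stretch he (half_pos ha)
  refine hasDerivAt_integral_of_eq_zero_off_compact
    (G := fun r x ↦ r * deriv ρ (‖stretch e r x‖ ^ 2))
    (G' := fun r x ↦ deriv ρ (‖stretch e r x‖ ^ 2) +
      r * (deriv (deriv ρ) (‖stretch e r x‖ ^ 2) * (2 * r * ⟪e, x⟫_ℝ ^ 2)))
    (isCompact_closedBall (0 : E) R) ?_ (fun r ↦ by fun_prop) (by fun_prop) (fun r x ↦ ?_)
  · filter_upwards [eventually_ge_nhds (half_lt_self ha)] with r hr x hx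
    rw [(hR r hr x (by simpa using hx)).2, mul_zero]
  · exact ((hasDerivAt_id r).mul ((hρ.hasDerivAt_deriv _).comp r
      (hasDerivAt_norm_stretch_sq he x r))).congr_deriv (by simp)

lemma antitoneOn_setIntegral_stretch (he : ‖e‖ = 1) (hK : IsSymmConvex K)
    (hKm : MeasurableSet K) :
    AntitoneOn (fun a ↦ ∫ x in K, a * deriv ρ (‖stretch e a x‖ ^ 2)) (Ioi 0) := by
  have hderiv := fun (a : ℝ) (ha : 0 < a) ↦ hρ.hasDerivAt_setIntegral_stretch he ha K
  refine antitoneOn_of_deriv_nonpos (convex_Ioi 0)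
    (fun a ha ↦ (hderiv a ha).continuousAt.continuousWithinAt) ?_ ?_ <;> rw [interior_Ioi]
  · exact fun a ha ↦ (hderiv a ha).differentiableAt.differentiableWithinAt
  · exact fun a ha ↦ (hderiv a ha).deriv ▸ hρ.setIntegral_variation_nonpos he ha hK hKm

end IsRadialProfile

variable {E : Type*} [NormedAddCommGroup E] [InnerProductSpace ℝ E] [FiniteDimensional ℝ E]
  [MeasurableSpace E] [BorelSpace E]

/-- The rotation invariant measure on `E` with density `x ↦ -ρ' (‖x‖ ^ 2)`. -/
noncomputable def radialMeasure (E : Type*) [NormedAddCommGroup E] [InnerProductSpace ℝ E]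
    [FiniteDimensional ℝ E] [MeasurableSpace E] [BorelSpace E] (ρ : ℝ → ℝ) : Measure E :=
  volume.withDensity fun x ↦ ENNReal.ofReal (-deriv ρ (‖x‖ ^ 2))

namespace IsRadialProfile

variable {ρ : ℝ → ℝ} (hρ : IsRadialProfile ρ) {e : E} {K : Set E}
include hρ

lemma radialMeasure_preimage_stretch (he : ‖e‖ = 1) {a : ℝ} (ha : 0 < a)
    (hKm : MeasurableSet K) :
    radialMeasure E ρ (stretch e a⁻¹ ⁻¹' K) =
      ENNReal.ofReal (-∫ x in K, a * deriv ρ (‖stretch e a x‖ ^ 2)) := by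
  have := hρ.contDiff_deriv.continuous
  have hmap : Measure.map (stretch e a⁻¹) volume = ENNReal.ofReal a • (volume : Measure E) := by
    have := Measure.map_linearMap_addHaar_eq_smul_addHaar (volume : Measure E)
      (f := (stretch e a⁻¹ : E →ₗ[ℝ] E)) (by simp [det_stretch he, ha.ne'])
    simpa [det_stretch he, abs_of_pos ha] using this
  have meas : Measurable fun x : E ↦ ENNReal.ofReal (-deriv ρ (‖stretch e a x‖ ^ 2)) :=
    (by fun_prop : Continuous fun x ↦ -deriv ρ (‖stretch e a x‖ ^ 2)).measurable.ennreal_ofReal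
  have integrable : Integrable fun x : E ↦ -(a * deriv ρ (‖stretch e a x‖ ^ 2)) := by
    obtain ⟨R, hR⟩ := hρ.exists_radius_stretch he ha
    refine (by fun_prop : Continuous _).integrable_of_hasCompactSupport
      (HasCompactSupport.intro (isCompact_closedBall (0 : E) R) fun x hx ↦ ?_)
    rw [(hR a le_rfl x (by simpa using hx)).2, mul_zero, neg_zero]
  have nonneg (x : E) : 0 ≤ -(a * deriv ρ (‖stretch e a x‖ ^ 2)) :=
    neg_nonneg.2 (mul_nonpos_of_nonneg_of_nonpos ha.le hρ.antitone.deriv_nonpos)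
  calc radialMeasure E ρ (stretch e a⁻¹ ⁻¹' K)
      = ∫⁻ x in stretch e a⁻¹ ⁻¹' K,
          ENNReal.ofReal (-deriv ρ (‖stretch e a (stretch e a⁻¹ x)‖ ^ 2)) := by
        rw [radialMeasure, withDensity_apply _ ((stretch e a⁻¹).continuous.measurable hKm)]
        simp [stretch_stretch he, ha.ne']
    _ = ∫⁻ x in K, ENNReal.ofReal a * ENNReal.ofReal (-deriv ρ (‖stretch e a x‖ ^ 2)) := by
        rw [← setLIntegral_map hKm meas (stretch e a⁻¹).continuous.measurable, hmap,
          Measure.restrict_smul, lintegral_smul_measure, lintegral_const_mul _ meas, smul_eq_mul]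
    _ = ∫⁻ x in K, ENNReal.ofReal (-(a * deriv ρ (‖stretch e a x‖ ^ 2))) := by
        simp only [← ENNReal.ofReal_mul ha.le, mul_neg]
    _ = ENNReal.ofReal (-∫ x in K, a * deriv ρ (‖stretch e a x‖ ^ 2)) := by
        rw [← integral_neg, ofReal_integral_eq_lintegral_ofReal integrable.integrableOn
          (.of_forall nonneg)]

theorem radialMeasure_le_preimage_stretch (he : ‖e‖ = 1) {a : ℝ} (ha : 0 < a) (ha_one : a ≤ 1)
    (hK : IsSymmConvex K) (hKm : MeasurableSet K) :
    radialMeasure E ρ K ≤ radialMeasure E ρ (stretch e a ⁻¹' K) := by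
  calc radialMeasure E ρ K = radialMeasure E ρ (stretch e 1⁻¹ ⁻¹' K) := by simp
    _ ≤ radialMeasure E ρ (stretch e a⁻¹⁻¹ ⁻¹' K) := by
        rw [hρ.radialMeasure_preimage_stretch he one_pos hKm,
          hρ.radialMeasure_preimage_stretch he (inv_pos.2 ha) hKm]
        exact ENNReal.ofReal_le_ofReal (neg_le_neg (hρ.antitoneOn_setIntegral_stretch he hK hKm
          (mem_Ioi.2 one_pos) (mem_Ioi.2 (inv_pos.2 ha)) ((one_le_inv₀ ha).2 ha_one)))
    _ = radialMeasure E ρ (stretch e a ⁻¹' K) := by rw [inv_inv]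

end IsRadialProfile
end RadialProfile

lemma exists_isRadialProfile {a b : ℝ} (hab : a < b) :
    ∃ ρ, IsRadialProfile ρ ∧ (∀ t ∉ Icc a b, deriv ρ t = 0) ∧ ∃ t, deriv ρ t ≠ 0 := by
  have hba : 0 < b - a := sub_pos.2 hab
  let ρ : ℝ → ℝ := fun t ↦ Real.smoothTransition ((b - t) / (b - a))
  have eq_one {t : ℝ} (ht : t ≤ a) : ρ t = 1 :=
    Real.smoothTransition.one_of_one_le ((one_le_div hba).2 (by linarith))
  have eq_zero {t : ℝ} (ht : b ≤ t) : ρ t = 0 :=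
    Real.smoothTransition.zero_of_nonpos (div_nonpos_of_nonpos_of_nonneg (by linarith) hba.le)
  have hρ : IsRadialProfile ρ :=
    { contDiff := Real.smoothTransition.contDiff (n := 2) |>.comp (by fun_prop)
      antitone s t hst := Real.smoothTransition.monotone (by gcongr)
      eventually_eq_zero := (eventually_ge_atTop b).mono fun t ht ↦ eq_zero ht }
  refine ⟨ρ, hρ, fun t ht ↦ ?_, ?_⟩
  · rcases lt_or_ge t a with hta | hat
    · have : ρ =ᶠ[𝓝 t] fun _ ↦ 1 := (eventually_lt_nhds hta).mono fun s hs ↦ eq_one hs.le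
      simpa using this.deriv_eq
    · have hbt : b < t := not_le.1 fun htb ↦ ht ⟨hat, htb⟩
      have : ρ =ᶠ[𝓝 t] fun _ ↦ 0 := (eventually_gt_nhds hbt).mono fun s hs ↦ eq_zero hs.le
      simpa using this.deriv_eq
  · by_contra! hderiv
    have := is_const_of_deriv_eq_zero (hρ.contDiff.differentiable two_ne_zero) hderiv a b
    rw [eq_one le_rfl, eq_zero le_rfl] at this
    exact one_ne_zero this

lemma IsSymmConvex.smul_mem {E : Type*} [AddCommGroup E] [Module ℝ E] {K : Set E}
    (hK : IsSymmConvex K) {x : E} (hx : x ∈ K) {c : ℝ} (hc : 0 ≤ c) (hc_one : c ≤ 1) :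
    c • x ∈ K := by
  have := hK.convex hx (hK.neg_mem hx) (a := (1 + c) / 2) (b := (1 - c) / 2) (by linarith)
    (by linarith) (by ring)
  convert this using 1
  module

lemma measure_preimage_ge_of_tendsto {X ι F : Type*} [TopologicalSpace X] [MeasurableSpace X]
    [OpensMeasurableSpace X] [HasOuterApproxClosed X] [MeasurableSpace F] {ν : Measure F}
    [IsProbabilityMeasure ν] {l : Filter ι} [l.NeBot] [l.IsCountablyGenerated] {T : ι → F → X}
    {S : F → X} (hT : ∀ i, Measurable (T i)) (hS : Measurable S)
    (hTS : ∀ x, Tendsto (fun i ↦ T i x) l (𝓝 (S x))) {K : Set X} (hK : IsClosed K) {c : ℝ≥0∞}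
    (hc : ∀ᶠ i in l, c ≤ ν (T i ⁻¹' K)) : c ≤ ν (S ⁻¹' K) := by
  have hdistr := tendstoInDistribution_of_ae_tendsto (μ' := ν) (fun i ↦ (hT i).aemeasurable)
    hS.aemeasurable (.of_forall hTS)
  calc c ≤ l.limsup fun i ↦ ν (T i ⁻¹' K) :=
        le_limsup_of_frequently_le hc.frequently
    _ = l.limsup fun i ↦ ν.map (T i) K := by
        simp only [Measure.map_apply (hT _) hK.measurableSet]
    _ ≤ ν.map S K := ProbabilityMeasure.limsup_measure_closed_le_of_tendsto hdistr.tendsto hK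
    _ = ν (S ⁻¹' K) := Measure.map_apply hS hK.measurableSet

section Spherical

variable {E : Type*} [NormedAddCommGroup E] [InnerProductSpace ℝ E] [MeasurableSpace E]

/-- A measure is spherical if its characteristic function is radial; for finite measures this is
invariance under linear isometries. -/
def IsSpherical (ν : Measure E) : Prop :=
  ∀ ⦃v w⦄, ‖v‖ = ‖w‖ → charFun ν v = charFun ν w

lemma IsSpherical.charFun_smul_comm {ν : Measure E} (hν : IsSpherical ν) (x t : E) :
    charFun ν (‖x‖ • t) = charFun ν (‖t‖ • x) :=
  hν (by simp [norm_smul, mul_comm])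

variable [BorelSpace E] [FiniteDimensional ℝ E]

namespace IsRadialProfile

variable {ρ : ℝ → ℝ} (hρ : IsRadialProfile ρ)
include hρ

omit [InnerProductSpace ℝ E] [FiniteDimensional ℝ E] in
lemma measurable_density :
    Measurable fun x : E ↦ ENNReal.ofReal (-deriv ρ (‖x‖ ^ 2)) := by
  have := hρ.contDiff_deriv.continuous
  exact (by fun_prop : Continuous fun x : E ↦ -deriv ρ (‖x‖ ^ 2)).measurable.ennreal_ofReal

lemma isFiniteMeasure_radialMeasure : IsFiniteMeasure (radialMeasure E ρ) := by
  have := hρ.contDiff_deriv.continuous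
  obtain ⟨b, hb⟩ := hρ.exists_forall_ge_eq_zero
  have hsupp : HasCompactSupport fun x : E ↦ -deriv ρ (‖x‖ ^ 2) := by
    refine HasCompactSupport.intro (isCompact_closedBall (0 : E) (√b)) fun x hx ↦ ?_
    have : √b < ‖x‖ := by simpa using hx
    rw [(hb _ ((Real.sqrt_le_left (norm_nonneg x)).1 this.le)).2, neg_zero]
  exact isFiniteMeasure_withDensity_ofReal
    ((by fun_prop : Continuous _).integrable_of_hasCompactSupport hsupp).2

lemma isSpherical_radialMeasure : IsSpherical (radialMeasure E ρ) := by
  intro v w hvw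
  let R : E ≃ₗᵢ[ℝ] E := (ℝ ∙ (v - w))ᗮ.reflection
  have hRv : R v = w := Submodule.reflection_sub hvw
  have hR : MeasurePreserving R (radialMeasure E ρ) (radialMeasure E ρ) := by
    refine ⟨R.continuous.measurable, Measure.ext fun s hs ↦ ?_⟩
    rw [Measure.map_apply R.continuous.measurable hs, radialMeasure,
      withDensity_apply _ (R.continuous.measurable hs), withDensity_apply _ hs,
      ← R.measurePreserving.setLIntegral_comp_preimage hs hρ.measurable_density]
    simp only [R.norm_map]
  rw [charFun_apply, charFun_apply, ← hRv, ← hR.integral_comp R.toHomeomorph.measurableEmbedding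
    fun x ↦ Complex.exp (⟪x, R v⟫_ℝ * Complex.I)]
  simp only [R.inner_map_map]

lemma radialMeasure_univ_ne_zero [Nontrivial E] {t : ℝ} (ht : 0 ≤ t) (hderiv : deriv ρ t ≠ 0) :
    radialMeasure E ρ univ ≠ 0 := by
  have := hρ.contDiff_deriv.continuous
  intro h
  rw [Measure.measure_univ_eq_zero, radialMeasure,
    withDensity_eq_zero_iff hρ.measurable_density.aemeasurable] at h
  have density_eq_zero : (fun x : E ↦ ENNReal.ofReal (-deriv ρ (‖x‖ ^ 2))) = 0 :=
    ((ENNReal.continuous_ofReal.comp (by fun_prop)).ae_eq_iff_eq volume continuous_zero).1 h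
  obtain ⟨x, hx⟩ := exists_norm_eq E (Real.sqrt_nonneg t)
  have := congr_fun density_eq_zero x
  rw [hx, Real.sq_sqrt ht, Pi.zero_apply, ENNReal.ofReal_eq_zero, neg_nonpos] at this
  exact hderiv (hρ.antitone.deriv_nonpos.antisymm this)

lemma ae_radialMeasure_norm_sq_mem {s : Set ℝ} (hs : ∀ t ∉ s, deriv ρ t = 0) :
    ∀ᵐ x ∂radialMeasure E ρ, ‖x‖ ^ 2 ∈ s := by
  rw [radialMeasure, ae_withDensity_iff hρ.measurable_density]
  refine .of_forall fun x hx ↦ ?_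
  by_contra hxs
  simp [hs _ hxs] at hx

end IsRadialProfile

namespace IsSpherical

variable {m ν : Measure E} [IsFiniteMeasure m] [IsFiniteMeasure ν]

/-- Both laws have characteristic function `t ↦ ∫∫ exp (i‖t‖⟪x, z⟫)`. -/
theorem map_norm_smul_fst_eq_map_norm_smul_snd (hm : IsSpherical m) (hν : IsSpherical ν) :
    (m.prod ν).map (fun p ↦ ‖p.2‖ • p.1) = (m.prod ν).map (fun p ↦ ‖p.1‖ • p.2) := by
  refine Measure.ext_of_charFun (funext fun t ↦ ?_)
  have integrable {g : E × E → ℝ} (hg : Continuous g) :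
      Integrable (fun p ↦ Complex.exp (g p * Complex.I)) (m.prod ν) :=
    .of_bound (C := 1) (by fun_prop) (.of_forall fun p ↦ (Complex.norm_exp_ofReal_mul_I _).le)
  calc charFun ((m.prod ν).map fun p ↦ ‖p.2‖ • p.1) t
      = ∫ z, charFun m (‖z‖ • t) ∂ν := by
        rw [charFun_apply, integral_map (by fun_prop) (by fun_prop),
          integral_prod_symm _ (integrable (by fun_prop))]
        simp only [charFun_apply, real_inner_smul_left, real_inner_smul_right]
    _ = ∫ z, charFun m (‖t‖ • z) ∂ν := by simp only [hm.charFun_smul_comm]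
    _ = ∫ x, charFun ν (‖t‖ • x) ∂m := by
        simp only [charFun_apply, real_inner_smul_right]
        rw [← integral_integral_swap (integrable (by fun_prop))]
        simp only [real_inner_comm]
    _ = ∫ x, charFun ν (‖x‖ • t) ∂m := by simp only [hν.charFun_smul_comm]
    _ = charFun ((m.prod ν).map fun p ↦ ‖p.1‖ • p.2) t := by
        rw [charFun_apply, integral_map (by fun_prop) (by fun_prop),
          integral_prod _ (integrable (by fun_prop))]
        simp only [charFun_apply, real_inner_smul_left, real_inner_smul_right]

lemma lintegral_preimage_norm_smul_comm (hm : IsSpherical m) (hν : IsSpherical ν) {K : Set E}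
    (hK : MeasurableSet K) :
    ∫⁻ z, m ((‖z‖ • ·) ⁻¹' K) ∂ν = ∫⁻ x, ν ((‖x‖ • ·) ⁻¹' K) ∂m := by
  have h := congr_arg (· K) (map_norm_smul_fst_eq_map_norm_smul_snd hm hν)
  have hfst : Measurable fun p : E × E ↦ ‖p.2‖ • p.1 := by fun_prop
  have hsnd : Measurable fun p : E × E ↦ ‖p.1‖ • p.2 := by fun_prop
  simpa only [Measure.map_apply hfst hK, Measure.map_apply hsnd hK,
    Measure.prod_apply_symm (hfst hK), Measure.prod_apply (hsnd hK), preimage_preimage] using h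

variable {ν : Measure E} {e : E} {K : Set E}

lemma measure_le_preimage_smul_stretch [IsFiniteMeasure ν] (hν : IsSpherical ν) (he : ‖e‖ = 1)
    {a r : ℝ} (ha : 0 < a) (ha_one : a ≤ 1) (hr : 0 < r) (hr_one : r < 1) (hK : IsSymmConvex K)
    (hKm : MeasurableSet K) :
    ν K ≤ ν ((fun z ↦ r • stretch e a z) ⁻¹' K) := by
  have : Nontrivial E := ⟨e, 0, norm_ne_zero_iff.1 (he ▸ one_ne_zero)⟩
  obtain ⟨ρ, hρ, hsupp, t, ht⟩ :=
    exists_isRadialProfile (pow_lt_one₀ hr.le hr_one two_ne_zero : r ^ 2 < 1)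
  have ht_nonneg : 0 ≤ t := (sq_nonneg r).trans (not_not.1 (mt (hsupp t) ht)).1
  set m := radialMeasure E ρ
  have : IsFiniteMeasure m := hρ.isFiniteMeasure_radialMeasure
  have hm : IsSpherical m := hρ.isSpherical_radialMeasure
  have norm_mem : ∀ᵐ x ∂m, r ≤ ‖x‖ ∧ ‖x‖ ≤ 1 := by
    filter_upwards [hρ.ae_radialMeasure_norm_sq_mem hsupp] with x hx
    exact ⟨le_of_sq_le_sq hx.1 (norm_nonneg x), (sq_le_one_iff₀ (norm_nonneg x)).1 hx.2⟩
  have hT : Measurable (stretch e a) := (stretch e a).continuous.measurable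
  have key : m univ * ν K ≤ m univ * ν ((fun z ↦ r • stretch e a z) ⁻¹' K) := calc
    m univ * ν K = ∫⁻ _, ν K ∂m := by rw [lintegral_const, mul_comm]
    _ ≤ ∫⁻ x, ν ((‖x‖ • ·) ⁻¹' K) ∂m := by
        refine lintegral_mono_ae (norm_mem.mono fun x hx ↦ measure_mono fun z hz ↦ ?_)
        exact hK.smul_mem hz (norm_nonneg x) hx.2
    _ = ∫⁻ z, m ((‖z‖ • ·) ⁻¹' K) ∂ν := (hm.lintegral_preimage_norm_smul_comm hν hKm).symm
    _ ≤ ∫⁻ z, m ((‖z‖ • ·) ⁻¹' (stretch e a ⁻¹' K)) ∂ν := by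
        refine lintegral_mono fun z ↦ ?_
        have hzK : IsSymmConvex ((‖z‖ • ·) ⁻¹' K) := hK.preimage (LinearMap.lsmul ℝ E ‖z‖)
        simpa only [preimage_preimage, map_smul] using hρ.radialMeasure_le_preimage_stretch he ha
          ha_one hzK (hKm.preimage (measurable_const_smul ‖z‖))
    _ = ∫⁻ x, ν ((‖x‖ • ·) ⁻¹' (stretch e a ⁻¹' K)) ∂m :=
        hm.lintegral_preimage_norm_smul_comm hν (hT hKm)
    _ ≤ ∫⁻ _, ν ((fun z ↦ r • stretch e a z) ⁻¹' K) ∂m := by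
        refine lintegral_mono_ae (norm_mem.mono fun x hx ↦ measure_mono fun z hz ↦ ?_)
        have hx_pos : 0 < ‖x‖ := hr.trans_le hx.1
        have := hK.smul_mem hz (div_nonneg hr.le hx_pos.le) ((div_le_one hx_pos).2 hx.1)
        rwa [map_smul, smul_smul, div_mul_cancel₀ _ hx_pos.ne'] at this
    _ = m univ * ν ((fun z ↦ r • stretch e a z) ⁻¹' K) := by rw [lintegral_const, mul_comm]
  exact (ENNReal.mul_le_mul_iff_right (hρ.radialMeasure_univ_ne_zero ht_nonneg ht)
    (measure_ne_top m univ)).1 key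

theorem measure_le_preimage_stretch [IsProbabilityMeasure ν] (hν : IsSpherical ν) (he : ‖e‖ = 1)
    {a : ℝ} (ha : 0 ≤ a) (ha_one : a ≤ 1) (hK : IsSymmConvex K) (hKc : IsClosed K) :
    ν K ≤ ν (stretch e a ⁻¹' K) := by
  have hr : ∀ᶠ r : ℝ in 𝓝[<] 1, r ∈ Ioo (0 : ℝ) 1 := Ioo_mem_nhdsLT one_pos
  have tendsto (z : E) : Tendsto (fun r : ℝ ↦ r • stretch e (r * a + (1 - r)) z) (𝓝[<] 1)
      (𝓝 (stretch e a z)) := by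
    simp only [stretch_apply]
    refine (Continuous.tendsto' (by fun_prop) _ _ (by simp)).mono_left nhdsWithin_le_nhds
  refine measure_preimage_ge_of_tendsto (fun r ↦ by fun_prop) (by fun_prop) tendsto hKc ?_
  filter_upwards [hr] with r ⟨hr_pos, hr_one⟩
  exact hν.measure_le_preimage_smul_stretch he (by nlinarith) (by nlinarith) hr_pos hr_one hK
    hKc.measurableSet

end IsSpherical
end Spherical

section LinearContraction

variable {E F G : Type*} [NormedAddCommGroup E] [InnerProductSpace ℝ E]
  [NormedAddCommGroup F] [InnerProductSpace ℝ F] [NormedAddCommGroup G] [InnerProductSpace ℝ G]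

lemma exists_isPositive_forall_norm_eq [FiniteDimensional ℝ E] [FiniteDimensional ℝ F]
    (D : E →ₗ[ℝ] F) :
    ∃ T : E →ₗ[ℝ] E, T.IsPositive ∧ ∀ x, ‖T x‖ = ‖D x‖ := by
  let S := D.adjoint ∘ₗ D
  have hS : S.IsPositive := D.isPositive_adjoint_comp_self
  let b := hS.isSymmetric.eigenvectorBasis rfl
  let c := hS.isSymmetric.eigenvalues rfl
  have hc (i) : 0 ≤ c i := hS.nonneg_eigenvalues rfl i
  let T : E →ₗ[ℝ] E := ∑ i, √(c i) • (InnerProductSpace.rankOne ℝ (b i) (b i)).toLinearMap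
  have hT : T.IsPositive := LinearMap.isPositive_sum _ fun i _ ↦
    (InnerProductSpace.isPositive_rankOne_self (b i)).toLinearMap.smul_of_nonneg (by positivity)
  have T_basis (j) : T (b j) = √(c j) • b j := by
    simp [T, b.inner_eq_ite]
  have T_sq : T ∘ₗ T = S := b.toBasis.ext fun j ↦ by
    simp [T_basis, smul_smul, Real.mul_self_sqrt (hc j), S, b, c]
  refine ⟨T, hT, fun x ↦ ?_⟩
  rw [← sq_eq_sq₀ (norm_nonneg _) (norm_nonneg _), ← real_inner_self_eq_norm_sq,
    ← real_inner_self_eq_norm_sq, hT.isSymmetric, ← LinearMap.adjoint_inner_right]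
  exact congr_arg (inner ℝ x) (LinearMap.congr_fun T_sq x)

lemma exists_isPositive_forall_norm_apply_eq [FiniteDimensional ℝ F] [FiniteDimensional ℝ G]
    {A : E →ₗ[ℝ] F} {C : E →ₗ[ℝ] G} (hA : Function.Surjective A)
    (hCA : ∀ t, ‖C t‖ ≤ ‖A t‖) :
    ∃ T : F →ₗ[ℝ] F, T.IsPositive ∧ (∀ s, ‖T s‖ ≤ ‖s‖) ∧ ∀ t, ‖T (A t)‖ = ‖C t‖ := by
  obtain ⟨R, hR⟩ := A.exists_rightInverse_of_surjective (LinearMap.range_eq_top.2 hA)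
  have A_R (s : F) : A (R s) = s := LinearMap.congr_fun hR s
  obtain ⟨T, hT, norm_T⟩ := exists_isPositive_forall_norm_eq (C ∘ₗ R)
  refine ⟨T, hT, fun s ↦ ?_, fun t ↦ ?_⟩
  · simpa only [norm_T, LinearMap.comp_apply, A_R] using hCA (R s)
  · have C_sub : C (R (A t)) - C t = 0 := by
      simpa [A_R] using hCA (R (A t) - t)
    rw [norm_T, LinearMap.comp_apply, sub_eq_zero.1 C_sub]

lemma charFun_map_linearMap [FiniteDimensional ℝ E] [FiniteDimensional ℝ F] [MeasurableSpace E]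
    [BorelSpace E] [MeasurableSpace F] [BorelSpace F] (ν : Measure E) (L : E →ₗ[ℝ] F)
    (t : F) : charFun (ν.map L) t = charFun ν (L.adjoint t) := by
  have := L.continuous_of_finiteDimensional
  rw [charFun_apply, charFun_apply, integral_map (by fun_prop) (by fun_prop)]
  simp only [LinearMap.adjoint_inner_right]

namespace IsSpherical

variable [FiniteDimensional ℝ E] [MeasurableSpace E] [BorelSpace E] {ν : Measure E}
  [IsProbabilityMeasure ν] {K : Set E} {T : E →ₗ[ℝ] E}

theorem measure_le_preimage_of_apply_basis {ι : Type*} [Fintype ι]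
    (hν : IsSpherical ν) (b : OrthonormalBasis ι ℝ E) {c : ι → ℝ}
    (hc : ∀ i, c i ∈ Icc 0 1) (hT : ∀ i, T (b i) = c i • b i) (hK : IsSymmConvex K)
    (hKc : IsClosed K) : ν K ≤ ν (T ⁻¹' K) := by
  classical
  suffices h : ∀ (s : Finset ι) (c : ι → ℝ) (T : E →ₗ[ℝ] E), (∀ i, c i ∈ Icc 0 1) →
      (∀ i ∉ s, c i = 1) → (∀ i, T (b i) = c i • b i) → ν K ≤ ν (T ⁻¹' K) from
    h Finset.univ c T hc (by simp) hT
  intro s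
  induction s using Finset.induction with
  | empty =>
    intro c T _ hcs hT
    have : T = .id := b.toBasis.ext fun i ↦ by simp [hT, hcs]
    simp [this]
  | insert j s _ ih =>
    intro c T hc hcs hT
    let c' := Function.update c j 1
    let T' : E →ₗ[ℝ] E := b.toBasis.constr ℝ fun i ↦ c' i • b i
    have hT' (i) : T' (b i) = c' i • b i := by
      rw [← b.coe_toBasis]
      exact b.toBasis.constr_basis ℝ _ i
    have factor : T = T' ∘ₗ (stretch (b j) (c j) : E →ₗ[ℝ] E) := b.toBasis.ext fun i ↦ by
      rcases eq_or_ne i j with rfl | hij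
      · simp [hT, stretch_self, hT', c']
      · simp [hT, stretch_apply, hT', c', hij, b.inner_eq_zero hij.symm]
    calc ν K ≤ ν (T' ⁻¹' K) := by
          refine ih c' T' (fun i ↦ ?_) (fun i hi ↦ ?_) hT' <;> rcases eq_or_ne i j with rfl | hij
          · simp [c']
          · simpa [c', hij] using hc i
          · simp [c']
          · simpa [c', hij] using hcs i (by simp [hij, hi])
      _ ≤ ν (stretch (b j) (c j) ⁻¹' (T' ⁻¹' K)) :=
          hν.measure_le_preimage_stretch (b.norm_eq_one j) (hc j).1 (hc j).2 (hK.preimage T')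
            (hKc.preimage T'.continuous_of_finiteDimensional)
      _ = ν (T ⁻¹' K) := by rw [factor, preimage_preimage]; rfl

theorem measure_le_preimage_of_isPositive (hν : IsSpherical ν) (hT : T.IsPositive)
    (hT_le : ∀ x, ‖T x‖ ≤ ‖x‖) (hK : IsSymmConvex K) (hKc : IsClosed K) :
    ν K ≤ ν (T ⁻¹' K) := by
  let b := hT.isSymmetric.eigenvectorBasis rfl
  have T_basis (i) : T (b i) = hT.isSymmetric.eigenvalues rfl i • b i :=
    hT.isSymmetric.apply_eigenvectorBasis rfl i
  refine hν.measure_le_preimage_of_apply_basis b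
    (fun i ↦ ⟨hT.nonneg_eigenvalues rfl i, (le_abs_self _).trans ?_⟩) T_basis hK hKc
  simpa [T_basis, norm_smul] using hT_le (b i)

end IsSpherical

section Law

variable [FiniteDimensional ℝ E] [MeasurableSpace E] [BorelSpace E] {μx μy : Measure E}
  [IsProbabilityMeasure μx] [IsProbabilityMeasure μy] {φ : ℝ → ℂ} {A : E →ₗ[ℝ] F}
  {C : E →ₗ[ℝ] G} {K : Set E}

lemma map_linearMap_eq_of_charFun [FiniteDimensional ℝ F] [MeasurableSpace F] [BorelSpace F]
    {ν : Measure F} [IsProbabilityMeasure ν] {L : F →ₗ[ℝ] E}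
    (h : ∀ t, charFun ν (L.adjoint t) = charFun μx t) : ν.map L = μx := by
  have := Measure.isProbabilityMeasure_map (μ := ν)
    L.continuous_of_finiteDimensional.measurable.aemeasurable
  exact Measure.ext_of_charFun (funext fun t ↦ by rw [charFun_map_linearMap, h])

/-- `μy` is the image under `A.adjoint` of a spherical law `ν` on `F`, and `μx` is its image under
`A.adjoint ∘ T` for a positive contraction `T`. -/
theorem measure_le_of_charFun_eq_norm_sq_of_surjective [FiniteDimensional ℝ F]
    [FiniteDimensional ℝ G] [MeasurableSpace F] [BorelSpace F]
    (hA : Function.Surjective A) (hμx : ∀ t, charFun μx t = φ (‖C t‖ ^ 2))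
    (hμy : ∀ t, charFun μy t = φ (‖A t‖ ^ 2)) (hCA : ∀ t, ‖C t‖ ≤ ‖A t‖)
    (hK : IsSymmConvex K) (hKc : IsClosed K) : μy K ≤ μx K := by
  have meas (L : F →ₗ[ℝ] E) : Measurable L := L.continuous_of_finiteDimensional.measurable
  obtain ⟨T, hT, T_le, T_A⟩ := exists_isPositive_forall_norm_apply_eq hA hCA
  obtain ⟨R, hR⟩ := A.exists_rightInverse_of_surjective (LinearMap.range_eq_top.2 hA)
  let ν := μy.map R.adjoint
  have : IsProbabilityMeasure ν := Measure.isProbabilityMeasure_map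
    R.adjoint.continuous_of_finiteDimensional.measurable.aemeasurable
  have charFun_ν (s : F) : charFun ν s = φ (‖s‖ ^ 2) := by
    rw [charFun_map_linearMap, R.adjoint_adjoint, hμy, ← A.comp_apply, hR, LinearMap.id_apply]
  have map_A : ν.map A.adjoint = μy := map_linearMap_eq_of_charFun fun t ↦ by
    rw [A.adjoint_adjoint, charFun_ν, hμy]
  have map_A_T : ν.map (A.adjoint ∘ₗ T) = μx := map_linearMap_eq_of_charFun fun t ↦ by
    rw [LinearMap.adjoint_comp, A.adjoint_adjoint, hT.adjoint_eq, LinearMap.comp_apply,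
      charFun_ν, T_A, hμx]
  have hν : IsSpherical ν := fun v w hvw ↦ by rw [charFun_ν, charFun_ν, hvw]
  calc μy K = ν (A.adjoint ⁻¹' K) := by
        rw [← map_A, Measure.map_apply (meas _) hKc.measurableSet]
    _ ≤ ν (T ⁻¹' (A.adjoint ⁻¹' K)) :=
        hν.measure_le_preimage_of_isPositive hT T_le (hK.preimage _)
          (hKc.preimage A.adjoint.continuous_of_finiteDimensional)
    _ = μx K := by rw [← map_A_T, Measure.map_apply (meas _) hKc.measurableSet]; rfl

theorem measure_le_of_charFun_eq_norm_sq [FiniteDimensional ℝ G]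
    (hμx : ∀ t, charFun μx t = φ (‖C t‖ ^ 2)) (hμy : ∀ t, charFun μy t = φ (‖A t‖ ^ 2))
    (hCA : ∀ t, ‖C t‖ ≤ ‖A t‖) (hK : IsSymmConvex K) (hKc : IsClosed K) : μy K ≤ μx K := by
  borelize ↥A.range
  exact measure_le_of_charFun_eq_norm_sq_of_surjective A.surjective_rangeRestrict hμx hμy hCA
    hK hKc

end Law

end LinearContraction

section Elliptical

variable {Ω : Type*} [MeasurableSpace Ω] {P : Measure Ω} {n : ℕ}

lemma charFun_map_toLp {X : Ω → Fin n → ℝ} (hX : Measurable X) (t : EuclideanSpace ℝ (Fin n)) :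
    charFun (P.map fun ω ↦ WithLp.toLp 2 (X ω)) t = charFn P X t.ofLp := by
  rw [charFun_apply, integral_map (by fun_prop) (by fun_prop), charFn]
  simp [PiLp.inner_apply]

lemma charFn_sub_const {X : Ω → Fin n → ℝ} {μ t : Fin n → ℝ} {z : ℂ}
    (h : charFn P X t = Complex.exp (((∑ i, t i * μ i : ℝ) : ℂ) * Complex.I) * z) :
    charFn P (fun ω ↦ X ω - μ) t = z := by
  calc charFn P (fun ω ↦ X ω - μ) t
      = charFn P X t * Complex.exp (-(((∑ i, t i * μ i : ℝ) : ℂ) * Complex.I)) := by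
        rw [charFn, charFn, ← integral_mul_const]
        congr with ω
        rw [← Complex.exp_add, ← sub_eq_add_neg, ← sub_mul, ← Complex.ofReal_sub,
          ← Finset.sum_sub_distrib]
        simp only [Pi.sub_apply, mul_sub]
    _ = z := by rw [h, mul_right_comm, ← Complex.exp_add, add_neg_cancel, Complex.exp_zero, one_mul]

open scoped MatrixOrder in
lemma exists_norm_sq_eq_dotProduct_mulVec {S : Matrix (Fin n) (Fin n) ℝ} (hS : S.PosSemidef) :
    ∃ A : EuclideanSpace ℝ (Fin n) →ₗ[ℝ] EuclideanSpace ℝ (Fin n),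
      ∀ t, ‖A t‖ ^ 2 = t.ofLp ⬝ᵥ S *ᵥ t.ofLp := by
  obtain ⟨A, rfl⟩ := CStarAlgebra.nonneg_iff_eq_star_mul_self.1 hS.nonneg
  refine ⟨A.toLpLin 2 2, fun t ↦ ?_⟩
  rw [star_eq_conjTranspose, conjTranspose_eq_transpose_of_trivial, ← mulVec_mulVec,
    dotProduct_mulVec, vecMul_transpose, EuclideanSpace.norm_sq_eq]
  simp [dotProduct, sq]

theorem measure_preimage_le_of_charFn_eq {Ω' : Type*} [MeasurableSpace Ω'] {P' : Measure Ω'}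
    [IsProbabilityMeasure P] [IsProbabilityMeasure P'] {X : Ω → Fin n → ℝ} {Y : Ω' → Fin n → ℝ}
    (hX : Measurable X) (hY : Measurable Y) {Sx Sy : Matrix (Fin n) (Fin n) ℝ}
    (hSx : Sx.PosSemidef) (hle : (Sy - Sx).PosSemidef) {φ : ℝ → ℂ}
    (hXell : ∀ t, charFn P X t = φ (t ⬝ᵥ Sx *ᵥ t)) (hYell : ∀ t, charFn P' Y t = φ (t ⬝ᵥ Sy *ᵥ t))
    {K : Set (Fin n → ℝ)} (hK : IsSymmConvex K) (hKc : IsClosed K) :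
    P' (Y ⁻¹' K) ≤ P (X ⁻¹' K) := by
  obtain ⟨C, hC⟩ := exists_norm_sq_eq_dotProduct_mulVec hSx
  obtain ⟨A, hA⟩ := exists_norm_sq_eq_dotProduct_mulVec (sub_add_cancel Sy Sx ▸ hle.add hSx)
  have hCA (t : EuclideanSpace ℝ (Fin n)) : ‖C t‖ ≤ ‖A t‖ := by
    rw [← sq_le_sq₀ (norm_nonneg _) (norm_nonneg _), hC, hA, ← sub_nonneg, ← dotProduct_sub,
      ← sub_mulVec]
    exact hle.dotProduct_mulVec_nonneg t.ofLp
  let L := (WithLp.linearEquiv 2 ℝ (Fin n → ℝ)).toLinearMap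
  have hLc : IsClosed (L ⁻¹' K) := hKc.preimage L.continuous_of_finiteDimensional
  have hX' : Measurable fun ω ↦ (WithLp.toLp 2 (X ω) : EuclideanSpace ℝ (Fin n)) := by fun_prop
  have hY' : Measurable fun ω ↦ (WithLp.toLp 2 (Y ω) : EuclideanSpace ℝ (Fin n)) := by fun_prop
  have := Measure.isProbabilityMeasure_map (μ := P) hX'.aemeasurable
  have := Measure.isProbabilityMeasure_map (μ := P') hY'.aemeasurable
  have key := measure_le_of_charFun_eq_norm_sq (φ := φ)
    (fun t ↦ by rw [charFun_map_toLp hX, hXell, hC])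
    (fun t ↦ by rw [charFun_map_toLp hY, hYell, hA]) hCA
    (hK.preimage L) hLc
  rwa [Measure.map_apply hX' hLc.measurableSet, Measure.map_apply hY' hLc.measurableSet] at key

end Elliptical

section Gini

lemma convexOn_finset_sum {E ι : Type*} [AddCommGroup E] [Module ℝ E] {s : Set E}
    {f : ι → E → ℝ} {u : Finset ι} (hs : Convex ℝ s) (hf : ∀ i ∈ u, ConvexOn ℝ s (f i)) :
    ConvexOn ℝ s fun x ↦ ∑ i ∈ u, f i x := by
  simpa only [← Finset.sum_fn] using
    Finset.sum_induction f (ConvexOn ℝ s) (fun _ _ ↦ .add) (convexOn_const 0 hs) hf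

variable {n : ℕ}

lemma continuous_gini : Continuous (gini : (Fin n → ℝ) → ℝ) := by
  unfold gini
  fun_prop

lemma gini_neg (x : Fin n → ℝ) : gini (-x) = gini x := by
  simp only [gini, Pi.neg_apply, neg_sub_neg, abs_sub_comm]

lemma gini_sub_const (x : Fin n → ℝ) (c : ℝ) : gini (x - fun _ ↦ c) = gini x := by
  simp [gini]

lemma convexOn_gini : ConvexOn ℝ univ (gini : (Fin n → ℝ) → ℝ) := by
  have convexOn_abs_sub (i j : Fin n) : ConvexOn ℝ univ fun x : Fin n → ℝ ↦ |x i - x j| := by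
    let L : (Fin n → ℝ) →ₗ[ℝ] ℝ := .proj i - .proj j
    exact (convexOn_norm convex_univ).comp_linearMap L
  exact .smul (by positivity) <| convexOn_finset_sum convex_univ fun i _ ↦
    convexOn_finset_sum convex_univ fun j _ ↦ convexOn_abs_sub i j

lemma isSymmConvex_setOf_gini_le (t : ℝ) : IsSymmConvex {x : Fin n → ℝ | gini x ≤ t} where
  convex := by simpa using convexOn_gini.convex_le t
  neg_mem x hx := by simpa [gini_neg] using hx

lemma isClosed_setOf_gini_le (t : ℝ) : IsClosed {x : Fin n → ℝ | gini x ≤ t} :=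
  isClosed_le continuous_gini continuous_const

end Gini

theorem gini_st_order_elliptical_general {Ω Ω' : Type*} [MeasurableSpace Ω] [MeasurableSpace Ω']
    {P : Measure Ω} {P' : Measure Ω'} [IsProbabilityMeasure P] [IsProbabilityMeasure P'] {n : ℕ}
    {X : Ω → Fin n → ℝ} {Y : Ω' → Fin n → ℝ} (hX : Measurable X) (hY : Measurable Y)
    {μ : Fin n → ℝ} {Sx Sy : Matrix (Fin n) (Fin n) ℝ} (hSx : Sx.PosSemidef)
    (hle : (Sy - Sx).PosSemidef) {φ : ℝ → ℂ}
    (hXell : ∀ t : Fin n → ℝ,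
      charFn P X t = Complex.exp (((∑ i, t i * μ i : ℝ) : ℂ) * Complex.I) * φ (t ⬝ᵥ Sx *ᵥ t))
    (hYell : ∀ t : Fin n → ℝ,
      charFn P' Y t = Complex.exp (((∑ i, t i * μ i : ℝ) : ℂ) * Complex.I) * φ (t ⬝ᵥ Sy *ᵥ t)) :
    (∀ t : ℝ, P {ω | t < gini (X ω - μ)} ≤ P' {ω | t < gini (Y ω - μ)}) ∧
    (∀ c : ℝ, μ = (fun _ ↦ c) → ∀ t : ℝ, P {ω | t < gini (X ω)} ≤ P' {ω | t < gini (Y ω)}) := by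
  have centered (t : ℝ) : P {ω | t < gini (X ω - μ)} ≤ P' {ω | t < gini (Y ω - μ)} := by
    have hK := isClosed_setOf_gini_le (n := n) t
    have hKX : MeasurableSet {ω | gini (X ω - μ) ≤ t} := (hX.sub_const μ) hK.measurableSet
    have hKY : MeasurableSet {ω | gini (Y ω - μ) ≤ t} := (hY.sub_const μ) hK.measurableSet
    have key : P' {ω | gini (Y ω - μ) ≤ t} ≤ P {ω | gini (X ω - μ) ≤ t} :=
      measure_preimage_le_of_charFn_eq (hX.sub_const μ) (hY.sub_const μ) hSx hle
        (fun s ↦ charFn_sub_const (hXell s)) (fun s ↦ charFn_sub_const (hYell s))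
        (isSymmConvex_setOf_gini_le t) hK
    simp only [← not_le, ← compl_ofPred]
    rw [prob_compl_eq_one_sub hKX, prob_compl_eq_one_sub hKY]
    exact tsub_le_tsub_left key 1
  refine ⟨centered, fun c hμ t ↦ ?_⟩
  simpa only [hμ, gini_sub_const] using centered t

/-- If `X ∼ ELLₙ(μ, Σx, φ)`, `Y ∼ ELLₙ(μ, Σy, φ)` and `Σx ⪯ Σy`, then
`G_n(X − μ) ≤_st G_n(Y − μ)`; in particular, if `μ = c·1ₙ` then `G_n(X) ≤_st G_n(Y)`. -/
theorem gini_st_order_elliptical {Ω : Type*} [MeasurableSpace Ω]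
    (P : Measure Ω) [IsProbabilityMeasure P] {n : ℕ}
    (X Y : Ω → Fin n → ℝ) (hX : Measurable X) (hY : Measurable Y)
    (μ : Fin n → ℝ) (Sx Sy : Matrix (Fin n) (Fin n) ℝ)
    (hSx : Sx.PosSemidef) (hSy : Sy.PosSemidef)
    (φ : ℝ → ℂ)
    (hXell : ∀ t : Fin n → ℝ,
      charFn P X t = Complex.exp (((∑ i, t i * μ i : ℝ) : ℂ) * Complex.I) * φ (t ⬝ᵥ Sx *ᵥ t))
    (hYell : ∀ t : Fin n → ℝ,
      charFn P Y t = Complex.exp (((∑ i, t i * μ i : ℝ) : ℂ) * Complex.I) * φ (t ⬝ᵥ Sy *ᵥ t))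
    (hle : (Sy - Sx).PosSemidef) :
    (∀ t : ℝ, P {ω | t < gini (X ω - μ)} ≤ P {ω | t < gini (Y ω - μ)}) ∧
    (∀ c : ℝ, μ = (fun _ => c) →
      ∀ t : ℝ, P {ω | t < gini (X ω)} ≤ P {ω | t < gini (Y ω)}) :=
  gini_st_order_elliptical_general hX hY hSx hle hXell hYell
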